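/- Let α ∈ (0,1) be irrational with continued fraction expansion α = [a_1, a_2, …] and suppose the sequence (a_n) is bounded. Then for every λ ∈ ℝ \ {0}, every θ ∈ [0,1), and every E ∈ ℂ, the limit γ_θ(E) = lim_{n→∞} (1/n)·ln‖M(λ,E,v_{α,θ}^n)‖ exists, and its value is the same for all θ ∈ [0,1). -/

import Mathlib

open scoped Classical

noncomputable section

/-- The Sturmian potential `v_{α,θ}(n) = χ_{[1-α,1)}(nα + θ mod 1)`. -/
def sturmian (α θ : ℝ) (n : ℤ) : ℝ :=
  if Int.fract (n * α + θ) ∈ Set.Ico (1 - α) 1 then 1 else 0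

/-- Iterates of the Gauss map, starting at `α`. -/
def cfGauss (α : ℝ) : ℕ → ℝ
  | 0 => α
  | n + 1 => Int.fract (cfGauss α n)⁻¹

/-- The continued fraction coefficients `a_n` of `α = [a_1, a_2, …]` (for `n ≥ 1`):
`a_1 = ⌊1/α⌋`, `a_2 = ⌊1/fract(1/α)⌋`, … . -/
def cfCoeff (α : ℝ) (n : ℕ) : ℕ := ⌊(cfGauss α (n - 1))⁻¹⌋₊

/-- The standard words, with an index shift: `sWord a n` is `s_{n-1}`.  Thus
`sWord a 0 = s_{-1} = 1`, `sWord a 1 = s_0 = 0`, `sWord a 2 = s_1 = 0^{a_1 - 1} 1`, and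
`sWord a (n+1) = s_n = s_{n-1}^{a_n} s_{n-2}` for `n ≥ 2`. -/
def sWord (a : ℕ → ℕ) : ℕ → List ℝ
  | 0 => [1]
  | 1 => [0]
  | 2 => List.replicate (a 1 - 1) (0 : ℝ) ++ [1]
  | n + 3 => (List.replicate (a (n + 2)) (sWord a (n + 2))).flatten ++ sWord a (n + 1)

/-- The `n`-th letter (for `n ≥ 1`) of the one-sided infinite word `c_α = lim s_n`:
since `|s_n| ≥ n`, it is the `n`-th letter of `s_n`. -/
def cword (α : ℝ) (n : ℕ) : ℝ := (sWord (cfCoeff α) (n + 1)).getD (n - 1) 0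

/-- `w` is a (finite) prefix of the one-sided infinite word `c_α`. -/
def IsPrefC (α : ℝ) (w : List ℝ) : Prop :=
  w = (List.range w.length).map fun i => cword α (i + 1)

/-- The one-step transfer matrix `T(λ,E,a) = [[E - λa, -1], [1, 0]]`. -/
def transferT (lam : ℝ) (E : ℂ) (a : ℝ) : Matrix (Fin 2) (Fin 2) ℂ :=
  !![E - lam * a, -1; 1, 0]

/-- The transfer matrix over a word `w = w_1 … w_n`:
`M(λ,E,w) = T(λ,E,w_n) ⋯ T(λ,E,w_1)`. -/
def transferM (lam : ℝ) (E : ℂ) : List ℝ → Matrix (Fin 2) (Fin 2) ℂ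
  | [] => 1
  | a :: w => transferM lam E w * transferT lam E a

/-- The operator norm on `ℂ²` (with the euclidean norm) of a `2 × 2` complex matrix. -/
def opNorm (A : Matrix (Fin 2) (Fin 2) ℂ) : ℝ :=
  ‖Matrix.toEuclideanCLM (𝕜 := ℂ) A‖

/-- The word `v_{α,θ}^n = v_{α,θ}(1) … v_{α,θ}(n)`. -/
def sturmianWord (α θ : ℝ) (n : ℕ) : List ℝ :=
  (List.range n).map fun k => sturmian α θ (k + 1)

/-- The set of finite nonempty subwords of a two-sided sequence `v : ℤ → ℝ`. -/
def SubZ (v : ℤ → ℝ) : Set (List ℝ) :=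
  {w | w ≠ [] ∧ ∃ k : ℤ, w = (List.range w.length).map fun i => v (k + i)}

/-- The set of finite nonempty subwords of the one-sided word `c_α` (indexed from `1`). -/
def SubC (α : ℝ) : Set (List ℝ) :=
  {w | w ≠ [] ∧ ∃ k : ℕ, 1 ≤ k ∧ w = (List.range w.length).map fun i => cword α (k + i)}

/-- `W_α`, the set of all finite nonempty subwords of the sequences `v_{α,θ}`, `θ ∈ [0,1)`. -/
def Walpha (α : ℝ) : Set (List ℝ) :=
  {w | ∃ θ ∈ Set.Ico (0 : ℝ) 1, w ∈ SubZ (sturmian α θ)}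

/-- `α` is a bounded density number: `limsup_{n→∞} (1/n) ∑_{j=1}^n a_j < ∞` for the
continued fraction coefficients `a_j` of `α`. -/
def BoundedDensity (α : ℝ) : Prop :=
  Filter.IsBoundedUnder (· ≤ ·) Filter.atTop
    (fun n : ℕ => (1 / n : ℝ) * ∑ j ∈ Finset.Icc 1 n, (cfCoeff α j : ℝ))

end

lemma aux_cf_key (α : ℝ) (b : ℝ) (hb0 : 0 < b)
    (hx : ∀ n, b ≤ cfGauss α n ∧ cfGauss α n < 1) :
    ∀ (Q : ℕ) (q p : ℤ) (n : ℕ) (ξ : ℝ), q ≤ Q → 1 ≤ q → 0 ≤ p → 0 ≤ ξ → ξ ≤ 1 →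
      b ^ 2 / 2 * (1 + ξ * cfGauss α n) ≤ (q + ξ * p) * |q * cfGauss α n - p| := by
  intro Q
  induction Q with
  | zero => intro q p n ξ h1 h2; exfalso; push_cast at h1; omega
  | succ Q ih =>
    intro q p n ξ hqQ hq hp hξ0 hξ1
    obtain ⟨hxb, hx1⟩ := hx n
    obtain ⟨hyb, hy1⟩ := hx (n + 1)
    have hy : cfGauss α (n + 1) = Int.fract (cfGauss α n)⁻¹ := rfl
    set x := cfGauss α n with hxdef
    set y := cfGauss α (n + 1) with hydef
    have hx0 : 0 < x := by linarith
    have hy0 : 0 < y := by linarith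
    set a : ℤ := ⌊x⁻¹⌋ with ha
    have hxa : x⁻¹ = a + y := by
      rw [hy, ha]; exact (Int.floor_add_fract _).symm
    have hxay : x * (a + y) = 1 := by rw [← hxa]; exact mul_inv_cancel₀ hx0.ne'
    have ha1 : (1 : ℤ) ≤ a := by
      rw [ha, Int.le_floor]; push_cast
      exact (one_le_inv₀ hx0).2 hx1.le
    have haR : (1 : ℝ) ≤ a := by exact_mod_cast ha1
    have hqR : (1 : ℝ) ≤ q := by exact_mod_cast hq
    have hpR : (0 : ℝ) ≤ p := by exact_mod_cast hp
    have hxy : b ^ 2 ≤ x * y := by nlinarith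
    have h1 : 1 + ξ * x ≤ 2 := by nlinarith
    have hξp : 0 ≤ ξ * p := by positivity
    -- it suffices to bound |qx - p| by x*y
    have suff : x * y ≤ |q * x - p| →
        b ^ 2 / 2 * (1 + ξ * x) ≤ (q + ξ * p) * |q * x - p| := by
      intro h
      have e1 : b ^ 2 / 2 * (1 + ξ * x) ≤ b ^ 2 / 2 * 2 := by gcongr
      have e2 : 1 * (x * y) ≤ (q + ξ * p) * |q * x - p| :=
        mul_le_mul (by linarith) h (by positivity) (by linarith)
      linarith
    rcases hp.eq_or_lt with hp0 | hp1
    · apply suff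
      rw [← hp0]; push_cast
      rw [sub_zero, abs_of_nonneg (by positivity)]
      nlinarith
    have hp1R : (1 : ℝ) ≤ p := by exact_mod_cast hp1
    by_cases hpq : q ≤ p
    · apply suff
      have hpqR : (q : ℝ) ≤ p := by exact_mod_cast hpq
      rw [abs_sub_comm]
      refine le_trans ?_ (le_abs_self _)
      have : x * y ≤ 1 - x := by nlinarith
      nlinarith
    push Not at hpq
    by_cases hp' : q - p * a < 0
    · apply suff
      have hpR' : (q : ℝ) ≤ p * a := by exact_mod_cast (by linarith : q ≤ p * a)
      rw [abs_sub_comm]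
      refine le_trans ?_ (le_abs_self _)
      have : (q : ℝ) * x ≤ p * a * x := by gcongr
      have h3 : (p : ℝ) * a * x = p * (1 - x * y) := by
        have : a * x = 1 - x * y := by linarith
        rw [mul_assoc, this]
      have : x * y ≤ p * (x * y) := by
        have : 0 ≤ x * y := by positivity
        nlinarith
      linarith
    push Not at hp'
    have haξ : 0 < a + ξ := by linarith
    have hI := ih p (q - p * a) (n + 1) (1 / (a + ξ)) (by push_cast at hqQ; omega) hp1 hp'
      (by positivity) (by rw [div_le_one haξ]; linarith)
    rw [← hydef] at hI
    push_cast at hI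
    have e1 : q * x - p = - (x * (p * y - (q - p * a))) := by
      linear_combination (p : ℝ) * hxay
    have e2 : |q * x - p| = x * |p * y - (q - p * a)| := by
      rw [e1, abs_neg, abs_mul, abs_of_pos hx0]
    have e3 : (p : ℝ) + 1 / (a + ξ) * (q - p * a) = (q + ξ * p) / (a + ξ) := by
      field_simp; ring
    have e4 : 1 + 1 / (a + ξ) * y = (1 + ξ * x) / (x * (a + ξ)) := by
      field_simp; linear_combination hxay
    rw [e3, e4] at hI
    rw [e2]
    have := mul_le_mul_of_nonneg_left hI (by positivity : 0 ≤ x * (a + ξ))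
    calc _ = x * (a + ξ) * (b ^ 2 / 2 * ((1 + ξ * x) / (x * (a + ξ)))) := by field_simp
      _ ≤ _ := this
      _ = _ := by field_simp

lemma aux_bad (α : ℝ) (hirr : Irrational α) (hα : α ∈ Set.Ioo (0 : ℝ) 1)
    (hbd : ∃ B : ℕ, ∀ n : ℕ, 1 ≤ n → cfCoeff α n ≤ B) :
    ∃ c : ℝ, 0 < c ∧ c ≤ 1 ∧ ∀ q p : ℤ, 1 ≤ q → c ≤ q * |q * α - p| := by
  obtain ⟨B, hB⟩ := hbd
  have h0 : ∀ n, Irrational (cfGauss α n) ∧ 0 < cfGauss α n ∧ cfGauss α n < 1 := by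
    intro n
    induction n with
    | zero => exact ⟨hirr, hα.1, hα.2⟩
    | succ n ih =>
      have hI : Irrational (cfGauss α (n + 1)) := by
        change Irrational (Int.fract (cfGauss α n)⁻¹)
        exact (irrational_inv_iff.2 ih.1).sub_intCast _
      refine ⟨hI, lt_of_le_of_ne (Int.fract_nonneg _) (Ne.symm hI.ne_zero), Int.fract_lt_one _⟩
  have hb : ∀ n, 1 / ((B : ℝ) + 1) ≤ cfGauss α n ∧ cfGauss α n < 1 := by
    intro n
    refine ⟨?_, (h0 n).2.2⟩
    have h1 := hB (n + 1) (by omega)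
    have h2 : (cfGauss α n)⁻¹ < B + 1 := by
      have h3 := Nat.lt_floor_add_one (cfGauss α n)⁻¹
      have h4 : ((⌊(cfGauss α n)⁻¹⌋₊ : ℕ) : ℝ) ≤ B := by exact_mod_cast h1
      linarith
    rw [one_div]
    exact inv_le_of_inv_le₀ (h0 n).2.1 h2.le
  have hB1 : (0 : ℝ) < 1 / ((B : ℝ) + 1) := by positivity
  have hB2 : 1 / ((B : ℝ) + 1) ≤ 1 := by rw [div_le_one (by positivity)]; simp
  refine ⟨(1 / ((B : ℝ) + 1)) ^ 2 / 2, by positivity, by nlinarith, ?_⟩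
  intro q p hq
  rcases le_or_gt 0 p with hp | hp
  · have := aux_cf_key α _ hB1 hb q.toNat q p 0 0 (by omega) hq hp le_rfl zero_le_one
    simpa [cfGauss] using this
  · have hqR : (1 : ℝ) ≤ q := by exact_mod_cast hq
    have hpR : (p : ℝ) < 0 := by exact_mod_cast hp
    have h1 : 1 / ((B : ℝ) + 1) ≤ α := (hb 0).1
    have h2 : α ≤ |q * α - p| := le_trans (by nlinarith [hα.1]) (le_abs_self _)
    have h3 : α ≤ q * |q * α - p| := by nlinarith [hα.1]
    nlinarith

lemma aux_dense (α c : ℝ) (hc : 0 < c)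
    (hbad : ∀ q p : ℤ, 1 ≤ q → c ≤ q * |q * α - p|) (N : ℕ) (hN : 0 < N) (x y : ℝ) :
    ∃ (j : ℕ) (m : ℤ), j < N ∧ y ≤ x + j * α + m ∧ x + j * α + m < y + (1 / c + 2) / N := by
  obtain ⟨s, hs1, hs2⟩ := Real.exists_rat_abs_sub_le_and_den_le α hN
  set q := s.den with hq
  have hq0 : 0 < q := s.den_pos
  have hqR : (0 : ℝ) < q := by exact_mod_cast hq0
  have hNR : (0 : ℝ) < N := by exact_mod_cast hN
  have hsR : (s : ℝ) = s.num / q := by rw [hq]; exact Rat.cast_def s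
  set r : ℤ := ⌈(q : ℝ) * (y + 1 / N - x)⌉ with hr
  have hcop : IsCoprime s.num (q : ℤ) := by
    rw [Int.isCoprime_iff_gcd_eq_one]; exact s.reduced
  obtain ⟨u, v, huv⟩ := hcop
  have hqZ : (0 : ℤ) < q := by exact_mod_cast hq0
  have hmod := Int.emod_add_mul_ediv (r * u) q
  have hj0 := Int.emod_nonneg (r * u) hqZ.ne'
  have hj1 := Int.emod_lt_of_pos (r * u) hqZ
  obtain ⟨j, hj⟩ := Int.eq_ofNat_of_zero_le hj0
  rw [hj] at hmod hj1
  set d := r * u / (q : ℤ) with hd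
  have hjq : j < q := by exact_mod_cast hj1
  refine ⟨j, d * s.num + r * v, lt_of_lt_of_le hjq hs2, ?_⟩
  have hjp : (j : ℤ) * s.num + (d * s.num + r * v) * q = r := by
    linear_combination s.num * hmod + r * huv
  have hjpR : (j : ℝ) * s.num + ((d * s.num + r * v : ℤ) : ℝ) * q = r := by exact_mod_cast hjp
  set m : ℤ := d * s.num + r * v with hm
  have hjqR : (j : ℝ) ≤ q := by exact_mod_cast hjq.le
  have herr : |(j : ℝ) * α - j * s| < 1 / N := by
    rw [← mul_sub, abs_mul, abs_of_nonneg (by positivity : (0 : ℝ) ≤ j)]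
    calc (j : ℝ) * |α - s| ≤ q * (1 / ((N + 1) * q)) := by gcongr
      _ = 1 / (N + 1) := by field_simp
      _ < 1 / N := by gcongr; linarith
  have hqlow : 1 / (q : ℝ) ≤ 1 / c / N := by
    have h1 := hbad q s.num (by omega)
    push_cast at h1
    have h2 : |(q : ℝ) * α - s.num| = q * |α - s| := by
      rw [hsR, ← abs_of_pos hqR, ← abs_mul, abs_of_pos hqR]; congr 1; field_simp
    have h3 : (q : ℝ) * |α - s| ≤ 1 / (N + 1) := by
      calc _ ≤ (q : ℝ) * (1 / (((N : ℝ) + 1) * q)) := by gcongr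
        _ = 1 / ((N : ℝ) + 1) := by field_simp
    rw [h2] at h1
    have h4 : c ≤ q * (1 / N) := by
      refine h1.trans ?_
      gcongr
      refine h3.trans ?_
      gcongr; linarith
    rw [div_div, div_le_div_iff₀ hqR (by positivity)]
    have : c * N ≤ q * (1 / N) * N := by gcongr
    have h5 : (q : ℝ) * (1 / N) * N = q := by field_simp
    linarith
  have hjs : (j : ℝ) * s + m = r / q := by
    rw [hsR, ← hjpR]; field_simp
  have hr1 : y + 1 / N - x ≤ r / q := by
    rw [le_div_iff₀ hqR, mul_comm]; exact Int.le_ceil _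
  have hr2 : (r : ℝ) / q < y + 1 / N - x + 1 / q := by
    rw [div_lt_iff₀ hqR]
    have := Int.ceil_lt_add_one ((q : ℝ) * (y + 1 / N - x))
    rw [← hr] at this
    have e : (y + 1 / N - x + 1 / (q : ℝ)) * q = q * (y + 1 / N - x) + 1 := by field_simp
    linarith
  have hsum : (1 / c + 2) / (N : ℝ) = 1 / c / N + 1 / N + 1 / N := by field_simp; ring
  rw [abs_lt] at herr
  constructor
  · linarith
  · rw [hsum]; linarith

lemma aux_word_def (α θ : ℝ) (n : ℕ) :
    sturmianWord α θ n = (List.range n).map fun k : ℕ => sturmian α θ ((k : ℤ) + 1) := by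
  unfold sturmianWord
  simp [List.map_eq_flatMap, List.flatMap_assoc]

lemma aux_sturmian_floor (α θ : ℝ) (hα : α ∈ Set.Ioo (0 : ℝ) 1) (n : ℤ) :
    sturmian α θ n = ((⌊((n + 1 : ℤ) : ℝ) * α + θ⌋ - ⌊(n : ℝ) * α + θ⌋ : ℤ) : ℝ) := by
  unfold sturmian
  have h0 := Int.fract_nonneg ((n : ℝ) * α + θ)
  have h1 := Int.fract_lt_one ((n : ℝ) * α + θ)
  have h2 := Int.floor_add_fract ((n : ℝ) * α + θ)
  have e : ((n + 1 : ℤ) : ℝ) * α + θ = (n : ℝ) * α + θ + α := by push_cast; ring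
  rw [e]
  set z := (n : ℝ) * α + θ
  obtain ⟨ha, hb⟩ := hα
  split_ifs with h
  · have : ⌊z + α⌋ = ⌊z⌋ + 1 := by
      rw [Int.floor_eq_iff]; push_cast
      exact ⟨by linarith [h.1], by linarith⟩
    rw [this]; push_cast; ring
  · have h' : Int.fract z < 1 - α := by
      by_contra hc; exact h ⟨not_lt.1 hc, h1⟩
    have : ⌊z + α⌋ = ⌊z⌋ := by
      rw [Int.floor_eq_iff]
      exact ⟨by linarith, by linarith⟩
    rw [this]; simp

lemma aux_word_eq (α θ θ' : ℝ) (hα : α ∈ Set.Ioo (0 : ℝ) 1) (n : ℕ) (m : ℤ)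
    (h : ∀ k : ℕ, k ≤ n → ⌊((k : ℝ) + 1) * α + θ'⌋ = ⌊((k : ℝ) + 1) * α + θ⌋ + m) :
    sturmianWord α θ' n = sturmianWord α θ n := by
  rw [aux_word_def, aux_word_def]
  apply List.map_congr_left
  intro k hk
  rw [List.mem_range] at hk
  have h1 := h k hk.le
  have h2 := h (k + 1) hk
  rw [aux_sturmian_floor α θ' hα, aux_sturmian_floor α θ hα]
  push_cast at h1 h2 ⊢
  rw [h1, h2]; push_cast; ring

lemma aux_repet (α c : ℝ) (hα : α ∈ Set.Ioo (0 : ℝ) 1) (hc : 0 < c) (hc1 : c ≤ 1)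
    (hbad : ∀ q p : ℤ, 1 ≤ q → c ≤ q * |q * α - p|) :
    ∃ K : ℕ, ∀ n : ℕ, 1 ≤ n → ∀ θ x : ℝ, ∃ j : ℕ, j < K * n ∧
      sturmianWord α (x + j * α) n = sturmianWord α θ n := by
  refine ⟨⌈(1 / c + 2) / c⌉₊, ?_⟩
  set K := ⌈(1 / c + 2) / c⌉₊ with hK
  have hKpos : 0 < K := Nat.ceil_pos.2 (by positivity)
  intro n hn θ x
  have hnR : (0 : ℝ) < n := by exact_mod_cast hn
  have hKR : (0 : ℝ) < K := by exact_mod_cast hKpos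
  -- extremal indices
  let g : ℕ → ℝ := fun k => Int.fract (((k : ℝ) + 1) * α + θ)
  obtain ⟨k1, hk1, hmin⟩ := Finset.exists_min_image (Finset.range (n + 1)) g ⟨0, by simp⟩
  obtain ⟨k2, hk2, hmax⟩ := Finset.exists_max_image (Finset.range (n + 1)) g ⟨0, by simp⟩
  rw [Finset.mem_range] at hk1 hk2
  have hg0 : ∀ k, 0 ≤ g k := fun k => Int.fract_nonneg _
  have hg1 : ∀ k, g k < 1 := fun k => Int.fract_lt_one _
  have hgf : ∀ k : ℕ, (⌊((k : ℝ) + 1) * α + θ⌋ : ℝ) + g k = ((k : ℝ) + 1) * α + θ :=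
    fun k => Int.floor_add_fract _
  have hlen : c / n ≤ g k1 + (1 - g k2) := by
    have hpos : 0 < g k1 + (1 - g k2) := by linarith [hg0 k1, hg1 k2]
    have hf1 := hgf k1
    have hf2 := hgf k2
    rcases lt_trichotomy k1 k2 with h | h | h
    · have hb := hbad ((k2 : ℤ) - k1) (1 + ⌊((k2 : ℝ) + 1) * α + θ⌋ - ⌊((k1 : ℝ) + 1) * α + θ⌋)
        (by omega)
      have e : (((k2 : ℤ) - k1 : ℤ) : ℝ) * α
          - ((1 + ⌊((k2 : ℝ) + 1) * α + θ⌋ - ⌊((k1 : ℝ) + 1) * α + θ⌋ : ℤ) : ℝ)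
          = -(g k1 + (1 - g k2)) := by push_cast; linarith
      rw [e, abs_neg, abs_of_pos hpos] at hb
      have hle : (((k2 : ℤ) - k1 : ℤ) : ℝ) ≤ n := by
        have : ((k2 : ℤ) - k1 : ℤ) ≤ n := by omega
        exact_mod_cast this
      rw [div_le_iff₀ hnR]
      nlinarith
    · rw [h]
      rw [div_le_iff₀ hnR]
      have : (1 : ℝ) ≤ n := by exact_mod_cast hn
      linarith
    · have hb := hbad ((k1 : ℤ) - k2) (⌊((k1 : ℝ) + 1) * α + θ⌋ - ⌊((k2 : ℝ) + 1) * α + θ⌋ - 1)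
        (by omega)
      have e : (((k1 : ℤ) - k2 : ℤ) : ℝ) * α
          - ((⌊((k1 : ℝ) + 1) * α + θ⌋ - ⌊((k2 : ℝ) + 1) * α + θ⌋ - 1 : ℤ) : ℝ)
          = g k1 + (1 - g k2) := by push_cast; linarith
      rw [e, abs_of_pos hpos] at hb
      have hle : (((k1 : ℤ) - k2 : ℤ) : ℝ) ≤ n := by
        have : ((k1 : ℤ) - k2 : ℤ) ≤ n := by omega
        exact_mod_cast this
      rw [div_le_iff₀ hnR]
      nlinarith
  obtain ⟨j, m, hj, hm1, hm2⟩ := aux_dense α c hc hbad (K * n) (by positivity) x (θ - g k1)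
  refine ⟨j, hj, ?_⟩
  have hKc : (1 / c + 2) / ((K * n : ℕ) : ℝ) ≤ c / n := by
    have h1 : (1 / c + 2) / c ≤ K := Nat.le_ceil _
    rw [div_le_iff₀ hc] at h1
    push_cast
    rw [div_le_div_iff₀ (by positivity) hnR]
    nlinarith
  apply aux_word_eq α θ (x + j * α) hα n (-m)
  intro k hk
  have hk' : k ∈ Finset.range (n + 1) := by rw [Finset.mem_range]; omega
  have hmi := hmin k hk'
  have hma := hmax k hk'
  have hf := hgf k
  rw [Int.floor_eq_iff]
  push_cast
  constructor <;> linarith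

lemma aux_subadd (α : ℝ) (f : ℕ → ℝ → ℝ) (C : ℝ)
    (hsub : ∀ m n θ, f (m + n) θ ≤ f m θ + f n (θ + m * α))
    (hbd : ∀ n θ, |f n θ| ≤ C * n)
    (K : ℕ) (hrep : ∀ n : ℕ, 1 ≤ n → ∀ θ x : ℝ, ∃ j : ℕ, j < K * n ∧ f n (x + j * α) = f n θ) :
    ∃ γ : ℝ, ∀ θ, Filter.Tendsto (fun n : ℕ => f n θ / n) Filter.atTop (nhds γ) := by
  set G : ℕ → ℝ := fun n => ⨆ θ, f n θ with hG
  have hbb : ∀ n, BddAbove (Set.range (f n)) := fun n =>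
    ⟨C * n, by rintro _ ⟨θ, rfl⟩; exact (abs_le.1 (hbd n θ)).2⟩
  have hle : ∀ n θ, f n θ ≤ G n := fun n θ => le_ciSup (hbb n) θ
  have hGsub : Subadditive G := by
    intro m n
    exact ciSup_le fun θ => (hsub m n θ).trans (add_le_add (hle _ _) (hle _ _))
  have hGbd : BddBelow (Set.range fun n => G n / (n : ℝ)) := by
    refine ⟨-|C|, ?_⟩
    rintro _ ⟨n, rfl⟩
    rcases Nat.eq_zero_or_pos n with h | h
    · subst h; simp
    · have hn : (0 : ℝ) < n := by exact_mod_cast h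
      have h1 := (abs_le.1 (hbd n 0)).1
      have h2 := hle n 0
      simp only
      rw [le_div_iff₀ hn]
      have := mul_le_mul_of_nonneg_right (le_abs_self C) hn.le
      linarith
  have hlim := hGsub.tendsto_lim hGbd
  have hlow : ∀ n : ℕ, n ≠ 0 → hGsub.lim ≤ G n / n := fun n hn => hGsub.lim_le_div hGbd hn
  set μ := hGsub.lim with hμ
  refine ⟨μ, fun θ => ?_⟩
  rw [Metric.tendsto_atTop] at hlim ⊢
  intro δ hδ
  have hKp : (0 : ℝ) < 2 * (K + 3) := by positivity
  set ε := δ / (2 * (K + 3)) with hε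
  have hε0 : 0 < ε := by positivity
  have hεδ : ε * (2 * (K + 3)) = δ := by rw [hε]; field_simp
  have hεle : ε < δ := by nlinarith [(Nat.cast_nonneg K : (0 : ℝ) ≤ K)]
  obtain ⟨N, hN⟩ := hlim ε hε0
  have hup : ∀ n, N ≤ n → 1 ≤ n → G n ≤ (μ + ε) * n := by
    intro n hn h1
    have h := hN n hn
    rw [Real.dist_eq, abs_lt] at h
    have hnR : (0 : ℝ) < n := by exact_mod_cast h1
    rw [← div_le_iff₀ hnR]; linarith
  refine ⟨N + 1, fun n hn => ?_⟩
  have hn1 : 1 ≤ n := by omega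
  have hnR : (0 : ℝ) < n := by exact_mod_cast hn1
  rw [Real.dist_eq, abs_lt]
  constructor
  · by_contra hcon
    push Not at hcon
    have hf : f n θ ≤ (μ - δ) * n := by
      rw [← div_le_iff₀ hnR]; linarith
    have hT : G ((K + 3) * n) ≤ (μ + ε) * ((K + 3) * n) - δ * n := by
      refine ciSup_le fun x => ?_
      obtain ⟨j, hj, hjf⟩ := hrep n hn1 θ (x + n * α)
      obtain ⟨t, ht⟩ : ∃ t, (K + 3) * n = (n + j) + (n + t) ∧ n ≤ t := by
        refine ⟨(K + 3) * n - (n + j) - n, ?_, ?_⟩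
        · have : (K + 3) * n = K * n + 3 * n := by ring
          omega
        · have : (K + 3) * n = K * n + 3 * n := by ring
          omega
      obtain ⟨ht, htn⟩ := ht
      have s1 := hsub (n + j) (n + t) x
      have s2 := hsub n t (x + ((n + j : ℕ) : ℝ) * α)
      have e : x + ((n + j : ℕ) : ℝ) * α = x + n * α + j * α := by push_cast; ring
      rw [e] at s1 s2
      have u1 := (hle (n + j) x).trans (hup (n + j) (by omega) (by omega))
      have u2 := (hle t (x + n * α + j * α + n * α)).trans (hup t (by omega) (by omega))
      rw [hjf] at s2
      have htR : ((K : ℝ) + 3) * n = (n + j) + (n + t) := by exact_mod_cast ht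
      rw [ht, htR]
      push_cast at u1
      nlinarith
    have hTl := hlow ((K + 3) * n) (by positivity)
    push_cast at hTl
    rw [le_div_iff₀ (by positivity)] at hTl
    nlinarith
  · have h1 := (hle n θ).trans (hup n (by omega) hn1)
    rw [← div_le_iff₀ hnR] at h1
    linarith

lemma aux_opNorm_mul (A B : Matrix (Fin 2) (Fin 2) ℂ) : opNorm (A * B) ≤ opNorm A * opNorm B := by
  unfold opNorm; rw [map_mul]; exact norm_mul_le _ _

lemma aux_opNorm_one : opNorm 1 = 1 := by
  unfold opNorm; rw [map_one]; exact norm_one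

lemma aux_opNorm_nonneg (A : Matrix (Fin 2) (Fin 2) ℂ) : 0 ≤ opNorm A := norm_nonneg _

lemma aux_M_append (lam : ℝ) (E : ℂ) (v w : List ℝ) :
    transferM lam E (v ++ w) = transferM lam E w * transferM lam E v := by
  induction v with
  | nil => simp [transferM]
  | cons a v ih => simp [transferM, ih, Matrix.mul_assoc]

lemma aux_bounds (lam : ℝ) (E : ℂ) : ∃ D : ℝ, 1 ≤ D ∧
    ∀ w : List ℝ, (∀ a ∈ w, a = 0 ∨ a = 1) →
      opNorm (transferM lam E w) ≤ D ^ w.length ∧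
      1 ≤ opNorm (transferM lam E w) * D ^ w.length := by
  let S : ℝ → Matrix (Fin 2) (Fin 2) ℂ := fun a => !![0, 1; -1, E - lam * a]
  have hS : ∀ a, transferT lam E a * S a = 1 := by
    intro a
    ext i j
    fin_cases i <;> fin_cases j <;> simp [S, transferT, Matrix.mul_apply, Fin.sum_univ_two]
  obtain ⟨D, hDe⟩ : ∃ D : ℝ, D = 1 + opNorm (transferT lam E 0) + opNorm (transferT lam E 1)
    + opNorm (S 0) + opNorm (S 1) := ⟨_, rfl⟩
  have n1 := aux_opNorm_nonneg (transferT lam E 0)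
  have n2 := aux_opNorm_nonneg (transferT lam E 1)
  have n3 := aux_opNorm_nonneg (S 0)
  have n4 := aux_opNorm_nonneg (S 1)
  have hD1 : 1 ≤ D := by linarith
  have hD0 : 0 ≤ D := by linarith
  have hTD : ∀ a : ℝ, (a = 0 ∨ a = 1) → opNorm (transferT lam E a) ≤ D ∧ opNorm (S a) ≤ D := by
    rintro a (rfl | rfl) <;> constructor <;> linarith
  refine ⟨D, hD1, fun w => ?_⟩
  induction w with
  | nil => intro _; simp [transferM, aux_opNorm_one]
  | cons a w ih =>
    intro h
    obtain ⟨i1, i2⟩ := ih fun b hb => h b (List.mem_cons_of_mem _ hb)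
    obtain ⟨t1, t2⟩ := hTD a (h a List.mem_cons_self)
    simp only [transferM, List.length_cons, pow_succ]
    constructor
    · exact (aux_opNorm_mul _ _).trans (mul_le_mul i1 t1 (aux_opNorm_nonneg _) (pow_nonneg hD0 _))
    · have h1 : opNorm (transferM lam E w) ≤
          opNorm (transferM lam E w * transferT lam E a) * D := by
        calc opNorm (transferM lam E w)
            = opNorm (transferM lam E w * transferT lam E a * S a) := by
              rw [Matrix.mul_assoc, hS, Matrix.mul_one]
          _ ≤ _ := aux_opNorm_mul _ _
          _ ≤ _ := mul_le_mul_of_nonneg_left t2 (aux_opNorm_nonneg _)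
      calc 1 ≤ opNorm (transferM lam E w) * D ^ w.length := i2
        _ ≤ opNorm (transferM lam E w * transferT lam E a) * D * D ^ w.length :=
          mul_le_mul_of_nonneg_right h1 (pow_nonneg hD0 _)
        _ = _ := by ring

lemma aux_word_append (α θ : ℝ) (m n : ℕ) :
    sturmianWord α θ (m + n) = sturmianWord α θ m ++ sturmianWord α (θ + m * α) n := by
  rw [aux_word_def, aux_word_def, aux_word_def, List.range_add, List.map_append, List.map_map]
  congr 1
  apply List.map_congr_left
  intro k _
  simp only [Function.comp, sturmian]
  have : (((m + k : ℕ) + 1 : ℤ) : ℝ) * α + θ = ((k + 1 : ℤ) : ℝ) * α + (θ + m * α) := by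
    push_cast; ring
  rw [this]

lemma aux_word_mem (α θ : ℝ) (n : ℕ) : ∀ a ∈ sturmianWord α θ n, a = 0 ∨ a = 1 := by
  intro a ha
  rw [aux_word_def] at ha
  obtain ⟨k, _, rfl⟩ := List.mem_map.1 ha
  unfold sturmian
  split_ifs <;> simp

theorem lyapunov_exponent_exists_uniformly
    (α : ℝ) (hirr : Irrational α) (hα : α ∈ Set.Ioo (0 : ℝ) 1)
    (hbd : ∃ B : ℕ, ∀ n : ℕ, 1 ≤ n → cfCoeff α n ≤ B)
    (lam : ℝ) (hlam : lam ≠ 0) (E : ℂ) :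
    ∃ γ : ℝ, ∀ θ ∈ Set.Ico (0 : ℝ) 1,
      Filter.Tendsto
        (fun n : ℕ => (1 / n : ℝ) * Real.log (opNorm (transferM lam E (sturmianWord α θ n))))
        Filter.atTop (nhds γ) := by

  obtain ⟨c, hc, hc1, hbad⟩ := aux_bad α hirr hα hbd
  obtain ⟨K, hK⟩ := aux_repet α c hα hc hc1 hbad
  obtain ⟨D, hD1, hD⟩ := aux_bounds lam E
  have hD0 : 0 < D := by linarith
  have hb : ∀ (n : ℕ) (θ : ℝ), opNorm (transferM lam E (sturmianWord α θ n)) ≤ D ^ n ∧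
      1 ≤ opNorm (transferM lam E (sturmianWord α θ n)) * D ^ n := by
    intro n θ
    have := hD _ (aux_word_mem α θ n)
    simpa [aux_word_def] using this
  have hpos : ∀ (n : ℕ) (θ : ℝ), 0 < opNorm (transferM lam E (sturmianWord α θ n)) := by
    intro n θ
    have h1 := (hb n θ).2
    rcases (aux_opNorm_nonneg (transferM lam E (sturmianWord α θ n))).eq_or_lt with h | h
    · rw [← h] at h1; simp at h1; linarith
    · exact h
  obtain ⟨γ, hγ⟩ := aux_subadd α
    (fun n θ => Real.log (opNorm (transferM lam E (sturmianWord α θ n)))) (Real.log D)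
    (by
      intro m n θ
      rw [← Real.log_mul (hpos m θ).ne' (hpos n (θ + m * α)).ne']
      apply Real.log_le_log (hpos _ _)
      rw [aux_word_append, aux_M_append,
        mul_comm (opNorm (transferM lam E (sturmianWord α θ m)))]
      exact aux_opNorm_mul _ _)
    (by
      intro n θ
      have h1 := Real.log_le_log (hpos n θ) (hb n θ).1
      have h2 := Real.log_nonneg (hb n θ).2
      rw [Real.log_mul (hpos n θ).ne' (by positivity), Real.log_pow] at h2
      rw [Real.log_pow] at h1
      rw [abs_le]
      constructor <;> linarith)
    K
    (by
      intro n hn θ x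
      obtain ⟨j, hj, he⟩ := hK n hn θ x
      exact ⟨j, hj, by simp only [he]⟩)
  refine ⟨γ, fun θ _ => (hγ θ).congr fun n => ?_⟩
  ring
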